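/- Let θ and Z be independent real random variables, where θ is uniformly distributed on [−π, π] and Z has probability density f(z) = (2π − |z|)/(4π²) on [−2π, 2π] (and 0 elsewhere). Then P(cos(Z − θ) ≥ 0 and |θ| ≤ π/2) = 1/4. -/

import Mathlib

open MeasureTheory ProbabilityTheory Real Set

/-!
Modulo `2π` the triangular law becomes the uniform law on the circle, because the density and its
translate by `2π` add up to a constant over one period. By translation invariance, `Z - θ` modulo
`2π` is then uniform and independent of `θ`, whatever the law of `θ`. The condition
`0 ≤ cos (Z - θ)` cuts out a half circle, so it has probability `1 / 2` independently of `θ`, while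
the uniform law on `[-π, π]` gives probability `1 / 2` to `|θ| ≤ π / 2`.
-/

open scoped ENNReal

theorem hasLaw_prodMk_sub_of_indepFun {Ω α G : Type*} {mΩ : MeasurableSpace Ω}
    {mα : MeasurableSpace α} {mG : MeasurableSpace G} [AddGroup G] [MeasurableAdd G]
    [MeasurableSub₂ G] {P : Measure Ω} [IsFiniteMeasure P] {ν : Measure α} {μ : Measure G}
    [μ.IsAddRightInvariant] {X : Ω → α} {Y : Ω → G} {f : α → G}
    (hX : HasLaw X ν P) (hY : HasLaw Y μ P) (hXY : IndepFun X Y P) (hf : Measurable f) :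
    HasLaw (fun ω ↦ (X ω, Y ω - f (X ω))) (ν.prod μ) P := by
  have : IsFiniteMeasure ν := hX.isFiniteMeasure_iff.mp ‹_›
  have : IsFiniteMeasure μ := hY.isFiniteMeasure_iff.mp ‹_›
  have hpair : HasLaw (fun ω ↦ (X ω, Y ω)) (ν.prod μ) P :=
    ⟨hX.aemeasurable.prodMk hY.aemeasurable, by
      rw [(indepFun_iff_map_prod_eq_prod_map_map hX.aemeasurable hY.aemeasurable).mp hXY,
        hX.map_eq, hY.map_eq]⟩
  have hshear : MeasurePreserving (fun p : α × G ↦ (p.1, p.2 - f p.1)) (ν.prod μ) (ν.prod μ) :=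
    (MeasurePreserving.id ν).skew_product (g := fun x y ↦ y - f x)
      (measurable_snd.sub (hf.comp measurable_fst))
      (.of_forall fun x ↦ (measurePreserving_sub_right μ (f x)).map_eq)
  exact hshear.fun_comp_hasLaw hpair

theorem lintegral_eq_setLIntegral_tsum_add_zsmul {T : ℝ} (hT : 0 < T) {f : ℝ → ℝ≥0∞}
    (hf : Measurable f) (a : ℝ) :
    ∫⁻ x, f x = ∫⁻ x in Ioc a (a + T), ∑' n : ℤ, f (x + n • T) := by
  let e : ℤ ≃ AddSubgroup.zmultiples T :=
    Equiv.ofInjective (fun n : ℤ ↦ n • T) (zsmul_left_strictMono hT).injective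
  have he (n : ℤ) : (e n : ℝ) = n • T := rfl
  calc ∫⁻ x, f x
      = ∑' g : AddSubgroup.zmultiples T, ∫⁻ x in Ioc a (a + T), f (g +ᵥ x) :=
        (isAddFundamentalDomain_Ioc hT a volume).lintegral_eq_tsum'' f
    _ = ∑' n : ℤ, ∫⁻ x in Ioc a (a + T), f (x + n • T) := by
        rw [← e.tsum_eq]
        simp only [AddSubgroup.vadd_def, vadd_eq_add, he, add_comm]
    _ = ∫⁻ x in Ioc a (a + T), ∑' n : ℤ, f (x + n • T) :=
        (lintegral_tsum fun n ↦ (hf.comp (measurable_add_const (n • T))).aemeasurable).symm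

section AddCircle

variable {T : ℝ} [hT : Fact (0 < T)]

theorem map_coe_addCircle_withDensity {f : ℝ → ℝ≥0∞} (hf : Measurable f)
    {g : AddCircle T → ℝ≥0∞} {a : ℝ}
    (hfg : ∀ x ∈ Ioc a (a + T), ∑' n : ℤ, f (x + n • T) = g x) :
    (volume.withDensity f).map ((↑) : ℝ → AddCircle T) = volume.withDensity g := by
  ext s hs
  set s' : Set ℝ := ((↑) : ℝ → AddCircle T) ⁻¹' s
  have hs' : MeasurableSet s' := AddCircle.measurable_mk' hs
  have hmem (x : ℝ) (n : ℤ) : x + n • T ∈ s' ↔ (x : AddCircle T) ∈ s := by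
    rw [mem_preimage, AddCircle.coe_add, AddCircle.coe_zsmul, AddCircle.coe_period, zsmul_zero,
      add_zero]
  have hwrap (x : ℝ) (hx : x ∈ Ioc a (a + T)) :
      ∑' n : ℤ, s'.indicator f (x + n • T) = s.indicator g (x : AddCircle T) := by
    by_cases hxs : (x : AddCircle T) ∈ s
    · simp only [indicator, hmem, hxs, if_true, hfg x hx]
    · simp only [indicator, hmem, hxs, if_false, tsum_zero]
  calc (volume.withDensity f).map ((↑) : ℝ → AddCircle T) s
      = ∫⁻ x, s'.indicator f x := by
        rw [Measure.map_apply AddCircle.measurable_mk' hs, withDensity_apply _ hs',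
          lintegral_indicator hs']
    _ = ∫⁻ x in Ioc a (a + T), s.indicator g (x : AddCircle T) := by
        rw [lintegral_eq_setLIntegral_tsum_add_zsmul hT.out (hf.indicator hs') a,
          setLIntegral_congr_fun measurableSet_Ioc hwrap]
    _ = volume.withDensity g s := by
        rw [AddCircle.lintegral_preimage, lintegral_indicator hs, withDensity_apply _ hs]

theorem haarAddCircle_closedBall (x : AddCircle T) (ε : ℝ) :
    AddCircle.haarAddCircle (Metric.closedBall x ε) = ENNReal.ofReal (min 1 (2 * ε / T)) := by
  have hT0 : ENNReal.ofReal T ≠ 0 := (ENNReal.ofReal_pos.mpr hT.out).ne'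
  have hvol := AddCircle.volume_closedBall T (x := x) ε
  rw [AddCircle.volume_eq_smul_haarAddCircle, Measure.smul_apply, smul_eq_mul] at hvol
  rw [← ENNReal.mul_right_inj hT0 ENNReal.ofReal_ne_top, hvol, ← ENNReal.ofReal_mul hT.out.le,
    mul_min_of_nonneg _ _ hT.out.le, mul_one, mul_div_cancel₀ _ hT.out.ne']

end AddCircle

/-- The density of the symmetric triangular law on `[-T, T]`. No indicator is needed, since
`ENNReal.ofReal` sends the negative values outside this interval to `0`. -/
noncomputable def triangularPDF (T x : ℝ) : ℝ≥0∞ :=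
  ENNReal.ofReal ((T - |x|) / T ^ 2)

theorem measurable_triangularPDF (T : ℝ) : Measurable (triangularPDF T) := by
  unfold triangularPDF
  fun_prop

theorem triangularPDF_eq_zero_of_le_abs {T x : ℝ} (h : T ≤ |x|) : triangularPDF T x = 0 :=
  ENNReal.ofReal_of_nonpos (div_nonpos_of_nonpos_of_nonneg (sub_nonpos.mpr h) (sq_nonneg T))

theorem ofReal_indicator_Icc_eq_triangularPDF (T x : ℝ) :
    ENNReal.ofReal ((Icc (-T) T).indicator (fun x ↦ (T - |x|) / T ^ 2) x) = triangularPDF T x := by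
  by_cases hx : x ∈ Icc (-T) T
  · rw [indicator_of_mem hx, triangularPDF]
  · have hTx : T ≤ |x| := le_of_not_ge fun h ↦ hx (abs_le.mp h)
    rw [indicator_of_notMem hx, ENNReal.ofReal_zero, triangularPDF_eq_zero_of_le_abs hTx]

theorem triangularPDF_add_triangularPDF_sub {T x : ℝ} (hx : x ∈ Ioc 0 T) :
    triangularPDF T x + triangularPDF T (x - T) = ENNReal.ofReal T⁻¹ := by
  obtain ⟨hx0, hxT⟩ := hx
  have hT : 0 < T := hx0.trans_le hxT
  rw [triangularPDF, triangularPDF, abs_of_pos hx0, abs_of_nonpos (sub_nonpos.mpr hxT),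
    ← ENNReal.ofReal_add (div_nonneg (by linarith) (sq_nonneg T))
      (div_nonneg (by linarith) (sq_nonneg T))]
  congr 1
  field_simp
  ring

theorem tsum_triangularPDF_add_zsmul {T x : ℝ} (hx : x ∈ Ioc 0 T) :
    ∑' n : ℤ, triangularPDF T (x + n • T) = ENNReal.ofReal T⁻¹ := by
  have hvanish (n : ℤ) (hn : n ∉ ({0, -1} : Finset ℤ)) : triangularPDF T (x + n • T) = 0 := by
    obtain ⟨hx0, hxT⟩ := hx
    apply triangularPDF_eq_zero_of_le_abs
    rw [zsmul_eq_mul, le_abs']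
    obtain hn1 | hn2 : 1 ≤ n ∨ n ≤ -2 := by grind
    · have : (1 : ℝ) ≤ n := mod_cast hn1
      right
      nlinarith
    · have : (n : ℝ) ≤ -2 := mod_cast hn2
      left
      nlinarith
  rw [tsum_eq_sum hvanish, Finset.sum_pair (by decide), zero_smul, add_zero, neg_one_zsmul,
    ← sub_eq_add_neg, triangularPDF_add_triangularPDF_sub hx]

theorem map_coe_addCircle_withDensity_triangularPDF {T : ℝ} [hT : Fact (0 < T)] :
    (volume.withDensity (triangularPDF T)).map ((↑) : ℝ → AddCircle T)
      = AddCircle.haarAddCircle := by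
  have hsum (x : ℝ) (hx : x ∈ Ioc 0 (0 + T)) :
      ∑' n : ℤ, triangularPDF T (x + n • T) = ENNReal.ofReal T⁻¹ :=
    tsum_triangularPDF_add_zsmul (by rwa [zero_add] at hx)
  rw [map_coe_addCircle_withDensity (measurable_triangularPDF T)
      (g := fun _ ↦ ENNReal.ofReal T⁻¹) hsum,
    withDensity_const, AddCircle.volume_eq_smul_haarAddCircle, smul_smul,
    ← ENNReal.ofReal_mul (inv_nonneg.mpr hT.out.le), inv_mul_cancel₀ hT.out.ne',
    ENNReal.ofReal_one, one_smul]

theorem norm_coe_addCircle_two_pi (x : ℝ) :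
    ‖(x : AddCircle (2 * π))‖ = |(x : Angle).toReal| := by
  have hcoe : (x : AddCircle (2 * π)) = ((x : Angle).toReal : AddCircle (2 * π)) :=
    (Angle.coe_toReal (x : Angle)).symm
  rw [hcoe, AddCircle.norm_coe_eq_abs_iff _ two_pi_pos.ne', abs_of_pos two_pi_pos,
    mul_div_cancel_left₀ _ two_ne_zero]
  exact Angle.abs_toReal_le_pi _

theorem cos_nonneg_iff_norm_coe_addCircle_le (x : ℝ) :
    0 ≤ cos x ↔ ‖(x : AddCircle (2 * π))‖ ≤ π / 2 := by
  rw [norm_coe_addCircle_two_pi, ← Angle.cos_coe, Angle.cos_nonneg_iff_abs_toReal_le_pi_div_two]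

theorem measure_abs_le_of_isUniform_Icc {Ω : Type*} {mΩ : MeasurableSpace Ω} {P : Measure Ω}
    {X : Ω → ℝ} {r R : ℝ} (hR : 0 < R) (hr : r ≤ R) (hX : pdf.IsUniform X (Icc (-R) R) P) :
    P {ω | |X ω| ≤ r} = ENNReal.ofReal (r / R) := by
  have hvol : volume (Icc (-R) R) = ENNReal.ofReal (2 * R) := by
    rw [volume_Icc, sub_neg_eq_add, two_mul]
  have hpre : {ω | |X ω| ≤ r} = X ⁻¹' Icc (-r) r := ext fun ω ↦ by
    rw [mem_ofPred_eq, abs_le, mem_preimage, mem_Icc]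
  rw [hpre, hX.measure_preimage (by simp [hvol, hR]) measure_Icc_lt_top.ne measurableSet_Icc,
    inter_eq_right.mpr (Icc_subset_Icc (neg_le_neg hr) hr), hvol, volume_Icc,
    ← ENNReal.ofReal_div_of_pos (by positivity), sub_neg_eq_add, ← two_mul,
    mul_div_mul_left _ _ two_ne_zero]

local instance fact_two_pi_pos : Fact (0 < 2 * π) := ⟨two_pi_pos⟩

theorem haarAddCircle_closedBall_pi_div_two :
    AddCircle.haarAddCircle (Metric.closedBall (0 : AddCircle (2 * π)) (π / 2)) = 2⁻¹ := by
  have hhalf : 2 * (π / 2) / (2 * π) = 2⁻¹ := by field_simp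
  rw [haarAddCircle_closedBall, hhalf, min_eq_right (by norm_num),
    ENNReal.ofReal_inv_of_pos two_pos, ENNReal.ofReal_ofNat]

theorem activation_case_probability_eq_quarter_general {Ω : Type*} {mΩ : MeasurableSpace Ω}
    {P : Measure Ω} {θ Z : Ω → ℝ} (hθ : AEMeasurable θ P)
    (hindep : IndepFun θ Z P)
    (hZ : HasLaw (fun ω ↦ (Z ω : AddCircle (2 * π))) AddCircle.haarAddCircle P)
    {A : Set ℝ} (hA : MeasurableSet A) :
    P {ω | 0 ≤ cos (Z ω - θ ω) ∧ θ ω ∈ A} = P {ω | θ ω ∈ A} / 2 := by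
  have : IsProbabilityMeasure P := hZ.isProbabilityMeasure
  have hmk : Measurable ((↑) : ℝ → AddCircle (2 * π)) := AddCircle.measurable_mk'
  have hθlaw : HasLaw θ (P.map θ) P := ⟨hθ, rfl⟩
  have hlaw : HasLaw (fun ω ↦ (θ ω, (Z ω - θ ω : AddCircle (2 * π))))
      ((P.map θ).prod AddCircle.haarAddCircle) P :=
    hasLaw_prodMk_sub_of_indepFun hθlaw hZ (hindep.comp measurable_id hmk) hmk
  set B : Set (AddCircle (2 * π)) := Metric.closedBall 0 (π / 2)
  have hB : MeasurableSet B := Metric.isClosed_closedBall.measurableSet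
  calc P {ω | 0 ≤ cos (Z ω - θ ω) ∧ θ ω ∈ A}
      = P {ω | (θ ω, (Z ω - θ ω : AddCircle (2 * π))) ∈ A ×ˢ B} := by
        simp only [B, cos_nonneg_iff_norm_coe_addCircle_le, AddCircle.coe_sub, mem_prod,
          mem_closedBall_zero_iff, and_comm]
    _ = P.map θ A * AddCircle.haarAddCircle B := by
        rw [hlaw.measure_eq (p := (· ∈ A ×ˢ B)) (hA.prod hB), ofPred_mem_eq, Measure.prod_prod]
    _ = P {ω | θ ω ∈ A} / 2 := by
        rw [haarAddCircle_closedBall_pi_div_two, ← div_eq_mul_inv,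
          Measure.map_apply_of_aemeasurable hθ hA, preimage]

/-- With `θ` uniform on `[-π, π]` and `Z` triangular on `[-2π, 2π]`,
independent, the probability of the event `cos (Z - θ) ≥ 0 ∧ |θ| ≤ π/2` equals `1/4`
(the case probability `P_{Π(c₁) ≥ Π(c₂)}` in Appendix B). -/
theorem activation_case_probability_eq_quarter
    {Ω : Type*} [MeasureSpace Ω] [IsProbabilityMeasure (ℙ : Measure Ω)]
    (θ Z : Ω → ℝ) (hmθ : Measurable θ) (hmZ : Measurable Z)
    (hindep : IndepFun θ Z ℙ)
    (hθ : (ℙ : Measure Ω).map θ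
        = (ENNReal.ofReal (2 * π))⁻¹ • (volume.restrict (Icc (-π) π)))
    (hZ : (ℙ : Measure Ω).map Z
        = volume.withDensity
            (fun z => ENNReal.ofReal
              (indicator (Icc (-(2 * π)) (2 * π)) (fun z => (2 * π - |z|) / (4 * π ^ 2)) z))) :
    ℙ {ω | 0 ≤ Real.cos (Z ω - θ ω) ∧ |θ ω| ≤ π / 2} = 1 / 4 := by
  rw [show 4 * π ^ 2 = (2 * π) ^ 2 by ring,
    funext (ofReal_indicator_Icc_eq_triangularPDF (2 * π))] at hZ
  have hmk : Measurable ((↑) : ℝ → AddCircle (2 * π)) := AddCircle.measurable_mk'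
  have hZwrapped : HasLaw (fun ω ↦ (Z ω : AddCircle (2 * π))) AddCircle.haarAddCircle ℙ :=
    HasLaw.fun_comp ⟨hmk.aemeasurable, map_coe_addCircle_withDensity_triangularPDF⟩
      ⟨hmZ.aemeasurable, hZ⟩
  have hθuniform : pdf.IsUniform θ (Icc (-π) π) ℙ := by
    rw [pdf.IsUniform, hθ, ProbabilityTheory.cond, volume_Icc, sub_neg_eq_add, two_mul]
  calc ℙ {ω | 0 ≤ cos (Z ω - θ ω) ∧ |θ ω| ≤ π / 2}
      = ℙ {ω | |θ ω| ≤ π / 2} / 2 :=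
        activation_case_probability_eq_quarter_general hmθ.aemeasurable hindep hZwrapped
          (A := {t | |t| ≤ π / 2}) (measurableSet_le (by fun_prop) (by fun_prop))
    _ = ENNReal.ofReal (1 / 4) := by
        rw [measure_abs_le_of_isUniform_Icc pi_pos (by linarith [pi_pos]) hθuniform,
          ← ENNReal.ofReal_ofNat 2, ← ENNReal.ofReal_div_of_pos two_pos]
        congr 1
        field_simp
        norm_num
    _ = 1 / 4 := by
        rw [ENNReal.ofReal_div_of_pos four_pos, ENNReal.ofReal_one, ENNReal.ofReal_ofNat]
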